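/- Let k, m be positive integers and let i, j be integers with 0 ≤ j ≤ i ≤ k and i ≥ 1. Then the element x_i^{m+k−j} + x_i^{m+k−i}·e_{i−j}(x_1,…,x_{i−1}) of R(k,m) lies in the ZMod 2-linear span of the basis monomials x_1^{n_1}·…·x_k^{n_k} (with 0 ≤ n_t ≤ m+k−t for all t) that satisfy n_i < m+k−i and n_ℓ = 0 for every ℓ > i. Here e_d denotes the d-th elementary symmetric polynomial in the indicated variables (e_0 = 1). -/

import Mathlib

/-!
Put `x = x_i`, `N = m + k - i`, and let `A` be the subalgebra generated by `x_1, …, x_{i-1}`.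
In characteristic two the generating series `H(l) = ∑ h_d(l) T^d` and `E(l) = ∑ e_d(l) T^d` are
inverse to each other, so `H(x_1, …, x_i) E(x_1, …, x_{i-1}) = 1 / (1 - x T)`, that is,
`x^{N+r} = ∑_u e_{N+r-u}(x_1, …, x_{i-1}) h_u(x_1, …, x_i)` (`pow_eq_sum`).

The recursion `h_{d+1}(x_1, …, x_i) = h_{d+1}(x_1, …, x_{i-1}) + x h_d(x_1, …, x_i)` shows that
`h_u(x_1, …, x_i) = 0` in `R(k,m)` for all `u > N` (`completeHomog_vanish`). As
`h_u(x_1, …, x_i) = ∑_t x^t h_{u-t}(x_1, …, x_{i-1})`, the term `u = N` contributes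
`x^N e_r(x_1, …, x_{i-1})` up to terms `x^c a` with `c < N` and `a ∈ A`, and the terms `u < N`
contribute only such `x^c a`. With `r = i - j` it remains to see that these products lie in the
span in question; this holds because `A` is spanned by the basis monomials in `x_1, …, x_{i-1}`
(`adjoin_le_monoSpan`), by induction on the number of variables: `h_{N+1}(x_1, …, x_i) = 0` is a
monic equation of degree `N + 1` for `x` over `A`.
-/

open scoped TensorProduct

/-- Complete homogeneous symmetric polynomial of degree `d` in a list of elements
of a commutative (semi)ring: `h_d(l)`. -/
noncomputable def completeHomog {R : Type*} [CommSemiring R] : List R → ℕ → R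
  | [], 0 => 1
  | [], _ + 1 => 0
  | x :: l, d => ∑ t ∈ Finset.range (d + 1), x ^ t * completeHomog l (d - t)

/-- Elementary symmetric polynomial of degree `d` in a list of elements: `e_d(l)`. -/
noncomputable def elemSymm {R : Type*} [CommSemiring R] : List R → ℕ → R
  | _, 0 => 1
  | [], _ + 1 => 0
  | x :: l, d + 1 => elemSymm l (d + 1) + x * elemSymm l d

/-- The ideal of `(ZMod 2)[x_1, …, x_k]` generated by the complete homogeneous
symmetric polynomials `h_{m+i}(x_1, …, x_{k+1-i})` for `1 ≤ i ≤ k`. -/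
noncomputable def flagIdeal (k m : ℕ) : Ideal (MvPolynomial (Fin k) (ZMod 2)) :=
  Ideal.span { p | ∃ i : ℕ, 1 ≤ i ∧ i ≤ k ∧
    p = completeHomog (((List.finRange k).take (k + 1 - i)).map MvPolynomial.X) (m + i) }

/-- `R(k,m)`, the quotient of `(ZMod 2)[x_1, …, x_k]` by `flagIdeal k m`;
this is the mod-2 cohomology ring of the real flag manifold `F(1^k, m)`. -/
abbrev FlagRing (k m : ℕ) : Type :=
  MvPolynomial (Fin k) (ZMod 2) ⧸ flagIdeal k m

/-- The image of the variable `x_{j+1}` in `R(k,m)` (`j` is 0-indexed). -/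
noncomputable def xGen (k m : ℕ) (j : Fin k) : FlagRing k m :=
  Ideal.Quotient.mk (flagIdeal k m) (MvPolynomial.X j)

/-- The zero-divisor `z_{j+1} = x_{j+1} ⊗ 1 + 1 ⊗ x_{j+1}` in `R(k,m) ⊗ R(k,m)`. -/
noncomputable def zGen (k m : ℕ) (j : Fin k) :
    FlagRing k m ⊗[ZMod 2] FlagRing k m :=
  xGen k m j ⊗ₜ 1 + 1 ⊗ₜ xGen k m j

/-- `x_{i+1,j+1}` in the `s`-fold tensor power `R(k,m)^{⊗ s}`: the element having
`x_{j+1}` in the `(i+1)`-st tensor factor and `1` elsewhere (`i`, `j` 0-indexed). -/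
noncomputable def xT (k m s : ℕ) (i : Fin s) (j : Fin k) :
    ⨂[ZMod 2] _ : Fin s, FlagRing k m :=
  PiTensorProduct.tprod (ZMod 2) (fun t => if t = i then xGen k m j else 1)

/-- The `s`-th zero-divisor `z_{i+1,j+1} = x_{1,j+1} + x_{i+1,j+1}` in `R(k,m)^{⊗ s}`. -/
noncomputable def zT (k m s : ℕ) (hs : 0 < s) (i : Fin s) (j : Fin k) :
    ⨂[ZMod 2] _ : Fin s, FlagRing k m :=
  xT k m s ⟨0, hs⟩ j + xT k m s i j

/-! ### Complete homogeneous and elementary symmetric functions in characteristic two -/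

lemma completeHomog_zero {R : Type*} [CommSemiring R] (l : List R) : completeHomog l 0 = 1 := by
  induction l with
  | nil => rfl
  | cons y l ih => simp [completeHomog, ih]

lemma mk_completeHomog_cons {R : Type*} [CommRing R] (x : R) (l : List R) :
    PowerSeries.mk (completeHomog (x :: l)) =
      PowerSeries.mk (fun n => x ^ n) * PowerSeries.mk (completeHomog l) := by
  ext n
  simp [completeHomog, PowerSeries.coeff_mul,
    Finset.Nat.sum_antidiagonal_eq_sum_range_succ (fun a b => x ^ a * completeHomog l b)]

lemma mk_elemSymm_cons {R : Type*} [CommRing R] (x : R) (l : List R) :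
    PowerSeries.mk (elemSymm (x :: l)) =
      (1 + PowerSeries.C x * PowerSeries.X) * PowerSeries.mk (elemSymm l) := by
  ext n
  cases n <;> simp [elemSymm, add_mul, mul_assoc, PowerSeries.coeff_succ_X_mul]

/-- In characteristic two the series of the `h_d` and of the `e_d` are mutually inverse. -/
lemma mk_completeHomog_mul_mk_elemSymm {R : Type*} [CommRing R] [CharP R 2] (l : List R) :
    (PowerSeries.mk (completeHomog l)) * (PowerSeries.mk (elemSymm l)) = 1 := by
  induction l with
  | nil =>
    have h1 : PowerSeries.mk (completeHomog ([] : List R)) = 1 := by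
      ext n; cases n <;> simp [completeHomog, PowerSeries.coeff_one]
    have h2 : PowerSeries.mk (elemSymm ([] : List R)) = 1 := by
      ext n; cases n <;> simp [elemSymm, PowerSeries.coeff_one]
    rw [h1, h2, one_mul]
  | cons x l ih =>
    have h3 : PowerSeries.mk (fun n => x ^ n) * (1 + PowerSeries.C x * PowerSeries.X) = 1 := by
      ext n
      rw [mul_add, mul_one, mul_left_comm]
      cases n with
      | zero => simp
      | succ n =>
        simp [PowerSeries.coeff_succ_mul_X, PowerSeries.coeff_one, ← pow_succ',
          CharTwo.add_self_eq_zero]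
    rw [mk_completeHomog_cons, mk_elemSymm_cons, mul_mul_mul_comm, h3, ih, one_mul]

lemma mk_elemSymm_append {R : Type*} [CommRing R] (x : R) (l : List R) :
    PowerSeries.mk (elemSymm (l ++ [x])) = PowerSeries.mk (elemSymm (x :: l)) := by
  induction l with
  | nil => rfl
  | cons y l ih =>
    rw [List.cons_append, mk_elemSymm_cons, ih]
    simp only [mk_elemSymm_cons]
    ring

lemma completeHomog_append {R : Type*} [CommRing R] [CharP R 2] (x : R) (l : List R) (d : ℕ) :
    completeHomog (l ++ [x]) d = completeHomog (x :: l) d := by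
  have h1 := mk_completeHomog_mul_mk_elemSymm (l ++ [x])
  have h2 := mk_completeHomog_mul_mk_elemSymm (x :: l)
  rw [mk_elemSymm_append] at h1
  rw [mul_comm] at h2
  have := congrArg (PowerSeries.coeff d) (left_inv_eq_right_inv h1 h2)
  simpa using this

/-- The coefficient of `T^d` in `H(x, l) E(l) = 1 / (1 - x T)`. -/
lemma pow_eq_sum {R : Type*} [CommRing R] [CharP R 2] (x : R) (l : List R) (d : ℕ) :
    x ^ d = ∑ u ∈ Finset.range (d + 1), elemSymm l (d - u) * completeHomog (x :: l) u := by
  have h2 : PowerSeries.mk (completeHomog (x :: l)) * PowerSeries.mk (elemSymm l) =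
      PowerSeries.mk (fun n => x ^ n) := by
    rw [mk_completeHomog_cons, mul_assoc, mk_completeHomog_mul_mk_elemSymm, mul_one]
  have h3 := congrArg (PowerSeries.coeff d) h2
  rw [PowerSeries.coeff_mul, PowerSeries.coeff_mk] at h3
  simp only [PowerSeries.coeff_mk] at h3
  rw [← h3, Finset.Nat.sum_antidiagonal_eq_sum_range_succ
    (fun a b => completeHomog (x :: l) a * elemSymm l b)]
  exact Finset.sum_congr rfl fun _ _ => mul_comm _ _

lemma completeHomog_cons_succ {R : Type*} [CommRing R] (x : R) (l : List R) (d : ℕ) :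
    completeHomog (x :: l) (d + 1) = completeHomog l (d + 1) + x * completeHomog (x :: l) d := by
  simp only [completeHomog]
  rw [Finset.sum_range_succ', Finset.mul_sum, add_comm]
  simp [pow_succ', mul_assoc]

lemma completeHomog_mem {R : Type*} [CommRing R] [Algebra (ZMod 2) R]
    (A : Subalgebra (ZMod 2) R) (l : List R) (hl : ∀ y ∈ l, y ∈ A) (d : ℕ) :
    completeHomog l d ∈ A := by
  induction l generalizing d with
  | nil => cases d <;> simp [completeHomog, A.one_mem, A.zero_mem]
  | cons x l ih =>
    simp only [completeHomog]
    exact A.sum_mem fun t _ => A.mul_mem (A.pow_mem (hl x (by simp)) _)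
      (ih (fun y hy => hl y (by simp [hy])) _)

lemma elemSymm_mem {R : Type*} [CommRing R] [Algebra (ZMod 2) R]
    (A : Subalgebra (ZMod 2) R) (l : List R) (hl : ∀ y ∈ l, y ∈ A) (d : ℕ) :
    elemSymm l d ∈ A := by
  induction l generalizing d with
  | nil => cases d <;> simp [elemSymm, A.one_mem, A.zero_mem]
  | cons x l ih =>
    have ih' := ih (fun y hy => hl y (by simp [hy]))
    cases d with
    | zero => simp [elemSymm, A.one_mem]
    | succ d =>
      simp only [elemSymm]
      exact A.add_mem (ih' _) (A.mul_mem (hl x (by simp)) (ih' _))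

lemma map_completeHomog {R S : Type*} [CommSemiring R] [CommSemiring S] (f : R →+* S)
    (l : List R) (d : ℕ) : f (completeHomog l d) = completeHomog (l.map f) d := by
  induction l generalizing d with
  | nil => cases d <;> simp [completeHomog]
  | cons x l ih => simp [completeHomog, ih]

/-! ### Algebras generated by a family with the relations of `R(k,m)` -/

/-- The list of the first `i` elements of the family `x`. -/
def firstVars {R : Type*} {k : ℕ} (x : Fin k → R) (i : ℕ) : List R := ((List.finRange k).take i).map x

lemma firstVars_succ {R : Type*} {k : ℕ} (x : Fin k → R) (p : Fin k) :
    firstVars x (p.val + 1) = firstVars x p.val ++ [x p] := by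
  have hp : p.val < (List.finRange k).length := by simp
  simp [firstVars, List.take_succ_eq_append_getElem hp]

lemma prod_update {R : Type*} [CommRing R] {k : ℕ} (x : Fin k → R) (n : Fin k → ℕ) (p : Fin k) (hp : n p = 0) (c : ℕ) :
    ∏ t, x t ^ (Function.update n p c t) = x p ^ c * ∏ t, x t ^ n t := by
  rw [← Finset.mul_prod_erase _ _ (Finset.mem_univ p),
    ← Finset.mul_prod_erase (a := p) Finset.univ (fun t => x t ^ n t) (Finset.mem_univ p)]
  simp only [Function.update_self, hp, pow_zero, one_mul]
  congr 1
  refine Finset.prod_congr rfl fun t ht => ?_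
  rw [Function.update_of_ne (Finset.ne_of_mem_erase ht)]

/-- The relations defining `R(k,m)` (with `Q = m + k`) force `h_d(x_1, …, x_i)` to vanish in
every degree `d` above `Q - i`, not only in the degree `Q - i + 1` of the relation. -/
lemma completeHomog_vanish {R : Type*} [CommRing R] [CharP R 2] {k : ℕ} (x : Fin k → R)
    (Q : ℕ) (hQ : k < Q)
    (hx : ∀ i, 1 ≤ i → i ≤ k → completeHomog (firstVars x i) (Q + 1 - i) = 0) (i : ℕ)
    (hi : i ≤ k) (d : ℕ) (hd : Q + 1 ≤ d + i) : completeHomog (firstVars x i) d = 0 := by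
  induction i generalizing d with
  | zero =>
    obtain ⟨e, rfl⟩ : ∃ e, d = e + 1 := ⟨d - 1, by omega⟩
    simp [firstVars, completeHomog]
  | succ i ih =>
    induction d with
    | zero => omega
    | succ d ihd =>
      by_cases h : Q + 1 = d + 1 + (i + 1)
      · have := hx (i + 1) (by omega) hi
        rwa [show Q + 1 - (i + 1) = d + 1 by omega] at this
      · have e := firstVars_succ x ⟨i, hi⟩
        simp only at e
        have h1 := ihd (by omega)
        rw [e, completeHomog_append] at h1 ⊢
        rw [completeHomog_cons_succ, h1, ih (by omega) _ (by omega)]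
        simp

section Abstract

variable {R : Type*} [CommRing R] [Algebra (ZMod 2) R] {k : ℕ}

/-- The subalgebra generated by the first `i` elements of the family `x`. -/
def firstAlg (x : Fin k → R) (i : ℕ) : Subalgebra (ZMod 2) R :=
  Algebra.adjoin (ZMod 2) {y | ∃ t : Fin k, t.val < i ∧ y = x t}

/-- The span of the monomials in the first `i` elements of `x` in which the exponent of `x t`
is less than `Q - t` (indices start at `0`); with `Q = m + k` these are basis monomials of `R(k,m)`. -/
def monoSpan (x : Fin k → R) (Q i : ℕ) : Submodule (ZMod 2) R :=
  Submodule.span (ZMod 2) {y | ∃ n : Fin k → ℕ, (∀ t, n t + t.val < Q) ∧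
    (∀ t : Fin k, i ≤ t.val → n t = 0) ∧ y = ∏ t, x t ^ n t}

lemma firstVars_mem (x : Fin k → R) (i : ℕ) : ∀ y ∈ firstVars x i, y ∈ firstAlg x i := by
  intro y hy
  simp only [firstVars, List.mem_map] at hy
  obtain ⟨t, ht, rfl⟩ := hy
  apply Algebra.subset_adjoin
  refine ⟨t, ?_, rfl⟩
  obtain ⟨j, hj, rfl⟩ := List.mem_iff_getElem.1 ht
  simp at hj ⊢
  omega

lemma charP_two_of_nontrivial [Nontrivial R] : CharP R 2 :=
  charP_of_injective_algebraMap (algebraMap (ZMod 2) R).injective 2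

/-- The subalgebra generated by the first `i` variables is spanned by their reduced monomials. -/
lemma adjoin_le_monoSpan [CharP R 2] (x : Fin k → R) (Q : ℕ) (hQ : k < Q)
    (hx : ∀ i, 1 ≤ i → i ≤ k → completeHomog (firstVars x i) (Q + 1 - i) = 0) (i : ℕ)
    (hi : i ≤ k) : ∀ a ∈ firstAlg x i, a ∈ monoSpan x Q i := by
  induction i with
  | zero =>
    intro a ha
    have h0 : {y | ∃ t : Fin k, t.val < 0 ∧ y = x t} = (∅ : Set R) := by ext; simp
    rw [firstAlg, h0, Algebra.adjoin_empty, Algebra.mem_bot] at ha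
    obtain ⟨c, rfl⟩ := ha
    rw [Algebra.algebraMap_eq_smul_one]
    refine Submodule.smul_mem _ _ (Submodule.subset_span ⟨fun _ => 0, ?_, ?_, ?_⟩)
    · intro t; have := t.2; dsimp only; omega
    · simp
    · simp
  | succ i ih =>
    have ih := ih (by omega)
    let p : Fin k := ⟨i, hi⟩
    let W : Submodule (ZMod 2) R := Submodule.span (ZMod 2)
      {y | ∃ c a, c + i < Q ∧ a ∈ firstAlg x i ∧ y = x p ^ c * a}
    have hgen : ∀ c a, c + i < Q → a ∈ firstAlg x i → x p ^ c * a ∈ W :=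
      fun c a hc ha => Submodule.subset_span ⟨c, a, hc, ha, rfl⟩
    have hWM : W ≤ monoSpan x Q (i + 1) := by
      refine Submodule.span_le.2 ?_
      rintro _ ⟨c, a, hc, ha, rfl⟩
      have := ih a ha
      clear ha
      simp only [SetLike.mem_coe]
      induction this using Submodule.span_induction with
      | mem y hy =>
        obtain ⟨n, h1, h2, rfl⟩ := hy
        refine Submodule.subset_span ⟨Function.update n p c, ?_, ?_, ?_⟩
        · intro t
          by_cases htp : t = p
          · subst htp; simpa [p] using hc
          · rw [Function.update_of_ne htp]; exact h1 t
        · intro t ht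
          have htp : t ≠ p := by rintro rfl; simp [p] at ht
          rw [Function.update_of_ne htp]; exact h2 t (by omega)
        · rw [prod_update x n p (h2 p le_rfl)]
      | zero => simp
      | add y z _ _ hy hz => rw [mul_add]; exact Submodule.add_mem _ hy hz
      | smul c y _ hy => rw [mul_smul_comm]; exact Submodule.smul_mem _ _ hy
    have hstep : ∀ t : Fin k, t.val < i + 1 → ∀ w ∈ W, x t * w ∈ W := by
      intro t ht w hw
      induction hw using Submodule.span_induction with
      | mem y hy =>
        obtain ⟨c, a, hc, ha, rfl⟩ := hy
        by_cases hti : t.val < i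
        · rw [mul_left_comm]
          exact hgen _ _ hc (Subalgebra.mul_mem _ (Algebra.subset_adjoin ⟨t, hti, rfl⟩) ha)
        · have htp : t = p := by ext; simp [p]; omega
          rw [htp, ← mul_assoc, ← pow_succ']
          by_cases hc1 : c + 1 + i < Q
          · exact hgen _ _ hc1 ha
          · -- `x p ^ (c + 1)` is the leading term of the relation `h_{c+1} = 0`
            have hv := completeHomog_vanish x Q hQ hx (i + 1) hi (c + 1) (by omega)
            have e : firstVars x (i + 1) = firstVars x i ++ [x p] := firstVars_succ x p
            rw [e, completeHomog_append, completeHomog, Finset.sum_range_succ] at hv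
            rw [Nat.sub_self, completeHomog_zero, mul_one] at hv
            rw [eq_neg_of_add_eq_zero_right hv, neg_mul, Finset.sum_mul]
            refine Submodule.neg_mem _ (Submodule.sum_mem _ fun s hs => ?_)
            rw [mul_assoc]
            have hs := Finset.mem_range.1 hs
            exact hgen _ _ (by omega)
              (Subalgebra.mul_mem _ (completeHomog_mem _ _ (firstVars_mem x i) _) ha)
      | zero => simp
      | add y z _ _ hy hz => rw [mul_add]; exact Submodule.add_mem _ hy hz
      | smul c y _ hy => rw [mul_smul_comm]; exact Submodule.smul_mem _ _ hy
    have hall : ∀ b ∈ firstAlg x (i + 1), ∀ w ∈ W, b * w ∈ W := by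
      intro b hb
      induction hb using Algebra.adjoin_induction with
      | mem y hy => obtain ⟨t, ht, rfl⟩ := hy; exact hstep t ht
      | algebraMap r =>
        intro w hw
        rw [← Algebra.smul_def]
        exact Submodule.smul_mem _ _ hw
      | add y z _ _ hy hz =>
        intro w hw
        rw [add_mul]
        exact Submodule.add_mem _ (hy w hw) (hz w hw)
      | mul y z _ _ hy hz =>
        intro w hw
        rw [mul_assoc]
        exact hy _ (hz w hw)
    intro a ha
    have h1 : (1 : R) ∈ W := by
      simpa using hgen 0 1 (by omega) (Subalgebra.one_mem _)
    simpa using hWM (hall a ha 1 h1)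

end Abstract

/-! ### The ring `R(k,m)` -/

lemma completeHomog_xGen (k m i : ℕ) (hi1 : 1 ≤ i) (hik : i ≤ k) :
    completeHomog (firstVars (xGen k m) i) (m + k + 1 - i) = 0 := by
  have h : completeHomog (((List.finRange k).take i).map MvPolynomial.X) (m + k + 1 - i) ∈
      flagIdeal k m := by
    refine Ideal.subset_span ⟨k + 1 - i, by omega, by omega, ?_⟩
    rw [show k + 1 - (k + 1 - i) = i by omega, show m + (k + 1 - i) = m + k + 1 - i by omega]
  have h2 := Ideal.Quotient.eq_zero_iff_mem.2 h
  rw [map_completeHomog, List.map_map] at h2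
  exact h2

/-- for `0 ≤ j ≤ i ≤ k` with `i ≥ 1`, the element
`x_i^{m+k-j} + x_i^{m+k-i} · e_{i-j}(x_1, …, x_{i-1})` of `R(k,m)` lies in the
`ZMod 2`-linear span of the basis monomials `x_1^{n_1} ⋯ x_k^{n_k}`
(`0 ≤ n_t ≤ m + k - t`) having `n_i < m + k - i` and `n_ℓ = 0` for all `ℓ > i`. -/
theorem statement6 (k m : ℕ) (hk : 0 < k) (hm : 0 < m) (i j : ℕ)
    (hj : j ≤ i) (hi1 : 1 ≤ i) (hik : i ≤ k) :
    xGen k m ⟨i - 1, by omega⟩ ^ (m + k - j) +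
      xGen k m ⟨i - 1, by omega⟩ ^ (m + k - i) *
        elemSymm (((List.finRange k).take (i - 1)).map (xGen k m)) (i - j) ∈
    Submodule.span (ZMod 2)
      { y : FlagRing k m | ∃ n : Fin k → ℕ,
          (∀ t : Fin k, n t + t.val < m + k) ∧
          n ⟨i - 1, by omega⟩ + i < m + k ∧
          (∀ t : Fin k, i ≤ t.val → n t = 0) ∧
          y = ∏ t : Fin k, xGen k m t ^ n t } := by
  rcases subsingleton_or_nontrivial (FlagRing k m) with hR | hR
  · convert Submodule.zero_mem _
  have : CharP (FlagRing k m) 2 := charP_two_of_nontrivial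
  obtain ⟨q, rfl⟩ : ∃ q, i = q + 1 := ⟨i - 1, by omega⟩
  have hx := completeHomog_xGen k m
  have hM := adjoin_le_monoSpan (xGen k m) (m + k) (by omega) hx q (by omega)
  have hV := completeHomog_vanish (xGen k m) (m + k) (by omega) hx (q + 1) hik
  let p : Fin k := ⟨q, hik⟩
  set T := Submodule.span (ZMod 2)
      { y : FlagRing k m | ∃ n : Fin k → ℕ,
          (∀ t : Fin k, n t + t.val < m + k) ∧
          n ⟨q + 1 - 1, by omega⟩ + (q + 1) < m + k ∧
          (∀ t : Fin k, q + 1 ≤ t.val → n t = 0) ∧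
          y = ∏ t : Fin k, xGen k m t ^ n t } with hT
  change xGen k m p ^ (m + k - j) + xGen k m p ^ (m + k - (q + 1)) *
    elemSymm (firstVars (xGen k m) q) (q + 1 - j) ∈ T
  have hgen : ∀ c a, c + (q + 1) < m + k → a ∈ firstAlg (xGen k m) q →
      xGen k m p ^ c * a ∈ T := by
    intro c a hc ha
    have := hM a ha
    clear ha
    induction this using Submodule.span_induction with
    | mem y hy =>
      obtain ⟨n, h1, h2, rfl⟩ := hy
      refine Submodule.subset_span ⟨Function.update n p c, ?_, ?_, ?_, ?_⟩
      · intro t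
        by_cases htp : t = p
        · subst htp; simp [p]; omega
        · rw [Function.update_of_ne htp]; exact h1 t
      · change Function.update n p c p + _ < _
        simpa using hc
      · intro t ht
        have htp : t ≠ p := by rintro rfl; simp [p] at ht
        rw [Function.update_of_ne htp]; exact h2 t (by omega)
      · rw [prod_update _ n p (h2 p le_rfl)]
    | zero => simp
    | add y z _ _ hy hz => rw [mul_add]; exact Submodule.add_mem _ hy hz
    | smul c y _ hy => rw [mul_smul_comm]; exact Submodule.smul_mem _ _ hy
  have e : firstVars (xGen k m) (q + 1) = firstVars (xGen k m) q ++ [xGen k m p] :=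
    firstVars_succ _ p
  have hA := firstVars_mem (xGen k m) q
  simp only [e, completeHomog_append] at hV
  generalize xGen k m p = x at *
  generalize firstVars (xGen k m) q = l at *
  generalize firstAlg (xGen k m) q = A at *
  obtain ⟨N, hN⟩ : ∃ N, N + (q + 1) = m + k := ⟨m + k - (q + 1), by omega⟩
  obtain ⟨r, hr⟩ : ∃ r, j + r = q + 1 := ⟨q + 1 - j, by omega⟩
  rw [show m + k - j = N + r by omega, show m + k - (q + 1) = N by omega,
    show q + 1 - j = r by omega]
  -- `∑_{t < v} x^t h_{u-t}(l)` is the part of `h_u(x, l)` of degree less than `v` in `x`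
  have hlow : ∀ u v a, v ≤ N → a ∈ A →
      a * ∑ t ∈ Finset.range v, x ^ t * completeHomog l (u - t) ∈ T := by
    intro u v a hv ha
    rw [Finset.mul_sum]
    refine Submodule.sum_mem _ fun t ht => ?_
    have := Finset.mem_range.1 ht
    rw [mul_left_comm]
    exact hgen _ _ (by omega) (A.mul_mem ha (completeHomog_mem A l hA _))
  rw [pow_eq_sum x l, show N + r + 1 = N + 1 + r by omega, Finset.sum_range_add,
    Finset.sum_eq_zero (s := Finset.range r)
      (fun u _ => by rw [hV _ (by omega), mul_zero]), add_zero, Finset.sum_range_succ,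
    Nat.add_sub_cancel_left, add_assoc]
  refine Submodule.add_mem _ (Submodule.sum_mem _ fun u hu => ?_) ?_
  · have := Finset.mem_range.1 hu
    rw [completeHomog]
    exact hlow _ _ _ (by omega) (elemSymm_mem A l hA _)
  · rw [completeHomog, Finset.sum_range_succ, Nat.sub_self, completeHomog_zero, mul_one, mul_add,
      mul_comm (x ^ N), add_assoc, CharTwo.add_self_eq_zero, add_zero]
    exact hlow _ _ _ le_rfl (elemSymm_mem A l hA _)
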